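/- arXiv:1908.00514 — 2 statements merged into one kernel-verified Lean document; each statement's English description precedes it below -/
import Mathlib

section
/- Let (J, v, π) be a classical solution of (E1)–(E3) on [0,L]×[0,T] with boundary condition v(0,t) = v(L,t) = 0, and assume additionally that ∂_y J exists with ∂_t ∂_y J continuous on [0,L]×[0,T]. Define B(y,t) := exp( (1/μ) ∫₀^y ρ₀(ξ)( v₀(ξ) − v(ξ,t) ) dξ ). Then there exists a continuous function H : [0,T] → (0,∞) with H(0) = 1 such that for all (y,t) ∈ [0,L]×[0,T]: ( J(y,t)/J₀(y) ) · H(t) · B(y,t) = exp( (1/μ) ∫₀ᵗ π(y,τ) dτ ). -/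
open Set MeasureTheory

/-- A classical solution `(J, v, π)` of the Lagrangian 1D non-heat-conductive compressible
Navier–Stokes system (E1)–(E3) on `[0,L] × [0,T]`, together with its partial derivatives
`Jt = ∂ₜJ`, `vy = ∂_y v`, `vt = ∂ₜv`, `w = ∂_y((∂_y v)/J)`, `πy = ∂_y π`, `πt = ∂ₜπ`,
all continuous on `[0,L] × [0,T]`, and `J > 0` everywhere. -/
structure ClassicalSolution (L T μ γ : ℝ) (ρ₀ : ℝ → ℝ)
    (J v π Jt vy vt w πy πt : ℝ → ℝ → ℝ) : Prop where
  Jpos : ∀ y ∈ Set.Icc (0:ℝ) L, ∀ t ∈ Set.Icc (0:ℝ) T, 0 < J y t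
  contJ : ContinuousOn (fun p : ℝ × ℝ => J p.1 p.2) (Set.Icc 0 L ×ˢ Set.Icc 0 T)
  contv : ContinuousOn (fun p : ℝ × ℝ => v p.1 p.2) (Set.Icc 0 L ×ˢ Set.Icc 0 T)
  contPi : ContinuousOn (fun p : ℝ × ℝ => π p.1 p.2) (Set.Icc 0 L ×ˢ Set.Icc 0 T)
  hJt : ∀ y ∈ Set.Icc (0:ℝ) L, ∀ t ∈ Set.Icc (0:ℝ) T,
    HasDerivWithinAt (fun s => J y s) (Jt y t) (Set.Icc 0 T) t
  hvy : ∀ y ∈ Set.Icc (0:ℝ) L, ∀ t ∈ Set.Icc (0:ℝ) T,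
    HasDerivWithinAt (fun x => v x t) (vy y t) (Set.Icc 0 L) y
  hvt : ∀ y ∈ Set.Icc (0:ℝ) L, ∀ t ∈ Set.Icc (0:ℝ) T,
    HasDerivWithinAt (fun s => v y s) (vt y t) (Set.Icc 0 T) t
  hw : ∀ y ∈ Set.Icc (0:ℝ) L, ∀ t ∈ Set.Icc (0:ℝ) T,
    HasDerivWithinAt (fun x => vy x t / J x t) (w y t) (Set.Icc 0 L) y
  hPiy : ∀ y ∈ Set.Icc (0:ℝ) L, ∀ t ∈ Set.Icc (0:ℝ) T,
    HasDerivWithinAt (fun x => π x t) (πy y t) (Set.Icc 0 L) y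
  hPit : ∀ y ∈ Set.Icc (0:ℝ) L, ∀ t ∈ Set.Icc (0:ℝ) T,
    HasDerivWithinAt (fun s => π y s) (πt y t) (Set.Icc 0 T) t
  contJt : ContinuousOn (fun p : ℝ × ℝ => Jt p.1 p.2) (Set.Icc 0 L ×ˢ Set.Icc 0 T)
  contvy : ContinuousOn (fun p : ℝ × ℝ => vy p.1 p.2) (Set.Icc 0 L ×ˢ Set.Icc 0 T)
  contvt : ContinuousOn (fun p : ℝ × ℝ => vt p.1 p.2) (Set.Icc 0 L ×ˢ Set.Icc 0 T)
  contw : ContinuousOn (fun p : ℝ × ℝ => w p.1 p.2) (Set.Icc 0 L ×ˢ Set.Icc 0 T)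
  contPiy : ContinuousOn (fun p : ℝ × ℝ => πy p.1 p.2) (Set.Icc 0 L ×ˢ Set.Icc 0 T)
  contPit : ContinuousOn (fun p : ℝ × ℝ => πt p.1 p.2) (Set.Icc 0 L ×ˢ Set.Icc 0 T)
  eq1 : ∀ y ∈ Set.Icc (0:ℝ) L, ∀ t ∈ Set.Icc (0:ℝ) T, Jt y t = vy y t
  eq2 : ∀ y ∈ Set.Icc (0:ℝ) L, ∀ t ∈ Set.Icc (0:ℝ) T,
    ρ₀ y * vt y t - μ * w y t + πy y t = 0
  eq3 : ∀ y ∈ Set.Icc (0:ℝ) L, ∀ t ∈ Set.Icc (0:ℝ) T,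
    πt y t + γ * (vy y t / J y t) * π y t = μ * (γ - 1) * (vy y t / J y t) ^ 2

/-!
By (E1), the momentum equation (E2) is the conservation law `∂ₜ(ρ₀ v) = ∂_y G` for the effective
viscous flux `G = μ Jₜ / J - π`. Integrating it over `[0, y] × [0, t]` gives
`∫₀ʸ ρ₀ (v - v₀) = ∫₀ᵗ G(y, ·) - ∫₀ᵗ G(0, ·)`. Since `Jₜ / J = ∂ₜ log J`, the first integral on the
right is `μ log (J / J₀) - ∫₀ᵗ π`, while the second depends on time only and yields
`H(t) = exp (-μ⁻¹ ∫₀ᵗ G(0, ·))` upon exponentiation.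
-/

section Calculus

variable {E : Type*} [NormedAddCommGroup E]

theorem intervalIntegrable_of_continuousOn_ordConnected {f : ℝ → E} {s : Set ℝ} {a b : ℝ}
    (hs : s.OrdConnected) (hf : ContinuousOn f s) (ha : a ∈ s) (hb : b ∈ s) :
    IntervalIntegrable f volume a b :=
  (hf.mono (hs.uIcc_subset ha hb)).intervalIntegrable

variable [NormedSpace ℝ E]

theorem integral_eq_sub_of_hasDerivWithinAt_ordConnected [CompleteSpace E] {f f' : ℝ → E}
    {s : Set ℝ} {a b : ℝ} (hs : s.OrdConnected)
    (hf : ∀ x ∈ s, HasDerivWithinAt f (f' x) s x) (hf' : ContinuousOn f' s)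
    (ha : a ∈ s) (hb : b ∈ s) :
    ∫ x in a..b, f' x = f b - f a := by
  have hsub : uIcc a b ⊆ s := hs.uIcc_subset ha hb
  refine intervalIntegral.integral_eq_sub_of_hasDeriv_right
    (fun x hx => (hf x (hsub hx)).continuousWithinAt.mono hsub) (fun x hx => ?_)
    (intervalIntegrable_of_continuousOn_ordConnected hs hf' ha hb)
  have hx_nhds : s ∈ nhds x := Filter.mem_of_superset (Icc_mem_nhds hx.1 hx.2) hsub
  exact ((hf x (hsub (Ioo_subset_Icc_self hx))).hasDerivAt hx_nhds).hasDerivWithinAt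

theorem intervalIntegral_swap_of_continuousOn_ordConnected {g : ℝ → ℝ → E} {s t : Set ℝ}
    {a b c d : ℝ} (hs : s.OrdConnected) (ht : t.OrdConnected)
    (hg : ContinuousOn g.uncurry (s ×ˢ t)) (ha : a ∈ s) (hb : b ∈ s) (hc : c ∈ t) (hd : d ∈ t) :
    ∫ x in a..b, ∫ y in c..d, g x y = ∫ y in c..d, ∫ x in a..b, g x y := by
  have hg_integrable : IntegrableOn g.uncurry (uIcc a b ×ˢ uIcc c d) :=
    (hg.mono (prod_mono (hs.uIcc_subset ha hb) (ht.uIcc_subset hc hd))).integrableOn_compact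
      (isCompact_uIcc.prod isCompact_uIcc)
  exact intervalIntegral_intervalIntegral_swap
    (hg_integrable.mono_set (prod_mono uIoc_subset_uIcc uIoc_subset_uIcc))

theorem integral_sub_eq_integral_sub_of_conservation_law [CompleteSpace E] {q F g : ℝ → ℝ → E}
    {S I : Set ℝ} {a y t₀ t : ℝ} (hS : S.OrdConnected) (hI : I.OrdConnected)
    (hq : ∀ x ∈ S, ∀ τ ∈ I, HasDerivWithinAt (q x) (g x τ) I τ)
    (hF : ∀ x ∈ S, ∀ τ ∈ I, HasDerivWithinAt (fun ξ => F ξ τ) (g x τ) S x)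
    (hg : ContinuousOn g.uncurry (S ×ˢ I))
    (ha : a ∈ S) (hy : y ∈ S) (ht₀ : t₀ ∈ I) (ht : t ∈ I) :
    ∫ x in a..y, (q x t - q x t₀) = ∫ τ in t₀..t, (F y τ - F a τ) := by
  calc ∫ x in a..y, (q x t - q x t₀)
      = ∫ x in a..y, ∫ τ in t₀..t, g x τ :=
        intervalIntegral.integral_congr fun x hx =>
          have hxS : x ∈ S := hS.uIcc_subset ha hy hx
          (integral_eq_sub_of_hasDerivWithinAt_ordConnected hI (hq x hxS)
            (hg.uncurry_left x hxS) ht₀ ht).symm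
    _ = ∫ τ in t₀..t, ∫ x in a..y, g x τ :=
        intervalIntegral_swap_of_continuousOn_ordConnected hS hI hg ha hy ht₀ ht
    _ = ∫ τ in t₀..t, (F y τ - F a τ) :=
        intervalIntegral.integral_congr fun τ hτ =>
          have hτI : τ ∈ I := hI.uIcc_subset ht₀ ht hτ
          integral_eq_sub_of_hasDerivWithinAt_ordConnected hS (fun x hx => hF x hx τ hτI)
            (hg.uncurry_right τ hτI) ha hy

theorem continuousOn_div_of_hasDerivWithinAt {f f' : ℝ → ℝ} {s : Set ℝ}
    (hf : ∀ x ∈ s, HasDerivWithinAt f (f' x) s x) (hf' : ContinuousOn f' s)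
    (hf_ne : ∀ x ∈ s, f x ≠ 0) : ContinuousOn (fun x => f' x / f x) s :=
  hf'.div (HasDerivWithinAt.continuousOn hf) hf_ne

theorem integral_div_eq_log_div_of_hasDerivWithinAt {f f' : ℝ → ℝ} {s : Set ℝ} {a b : ℝ}
    (hs : s.OrdConnected) (hf : ∀ x ∈ s, HasDerivWithinAt f (f' x) s x)
    (hf' : ContinuousOn f' s) (hf_ne : ∀ x ∈ s, f x ≠ 0) (ha : a ∈ s) (hb : b ∈ s) :
    ∫ x in a..b, f' x / f x = Real.log (f b / f a) := by
  rw [Real.log_div (hf_ne b hb) (hf_ne a ha)]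
  exact integral_eq_sub_of_hasDerivWithinAt_ordConnected hs
    (fun x hx => (hf x hx).log (hf_ne x hx))
    (continuousOn_div_of_hasDerivWithinAt hf hf' hf_ne) ha hb

end Calculus

/-- The effective viscous flux `μ Jₜ / J - π`; it is `μ (∂_y v) / J - π` for solutions of (E1).
The argument `Jt` stands for `∂ₜJ`. -/
noncomputable def effectiveViscousFlux (μ : ℝ) (J Jt π : ℝ → ℝ → ℝ) (y t : ℝ) : ℝ :=
  μ * (Jt y t / J y t) - π y t

/-- Classical solutions on `S × I` of the momentum balance `∂ₜ(ρ₀ v) = ∂_y (μ Jₜ / J - π)`, with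
`J > 0`. The arguments `Jt` and `mt` stand for `∂ₜJ` and `∂ₜ(ρ₀ v)`. Space differentiability is
required of the flux as a whole, not of its two terms separately. -/
structure MomentumBalance (S I : Set ℝ) (μ : ℝ) (ρ₀ : ℝ → ℝ) (J v π Jt mt : ℝ → ℝ → ℝ) :
    Prop where
  J_pos : ∀ y ∈ S, ∀ t ∈ I, 0 < J y t
  hasDerivWithinAt_J : ∀ y ∈ S, ∀ t ∈ I, HasDerivWithinAt (J y) (Jt y t) I t
  continuousOn_Jt : ∀ y ∈ S, ContinuousOn (Jt y) I
  continuousOn_π : ∀ y ∈ S, ContinuousOn (π y) I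
  hasDerivWithinAt_momentum : ∀ y ∈ S, ∀ t ∈ I,
    HasDerivWithinAt (fun τ => ρ₀ y * v y τ) (mt y t) I t
  hasDerivWithinAt_flux : ∀ y ∈ S, ∀ t ∈ I,
    HasDerivWithinAt (fun x => effectiveViscousFlux μ J Jt π x t) (mt y t) S y
  continuousOn_mt : ContinuousOn mt.uncurry (S ×ˢ I)

namespace MomentumBalance

variable {S I : Set ℝ} {μ : ℝ} {ρ₀ : ℝ → ℝ} {J v π Jt mt : ℝ → ℝ → ℝ} {a y t₀ t : ℝ}

theorem continuousOn_Jt_div_J (h : MomentumBalance S I μ ρ₀ J v π Jt mt) (hy : y ∈ S) :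
    ContinuousOn (fun τ => Jt y τ / J y τ) I :=
  continuousOn_div_of_hasDerivWithinAt (h.hasDerivWithinAt_J y hy) (h.continuousOn_Jt y hy)
    fun τ hτ => (h.J_pos y hy τ hτ).ne'

theorem continuousOn_flux (h : MomentumBalance S I μ ρ₀ J v π Jt mt) (hy : y ∈ S) :
    ContinuousOn (effectiveViscousFlux μ J Jt π y) I :=
  ((h.continuousOn_Jt_div_J hy).const_mul μ).sub (h.continuousOn_π y hy)

theorem integral_flux_eq (h : MomentumBalance S I μ ρ₀ J v π Jt mt) (hI : I.OrdConnected)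
    (hy : y ∈ S) (ht₀ : t₀ ∈ I) (ht : t ∈ I) :
    ∫ τ in t₀..t, effectiveViscousFlux μ J Jt π y τ
      = μ * Real.log (J y t / J y t₀) - ∫ τ in t₀..t, π y τ := by
  rw [← integral_div_eq_log_div_of_hasDerivWithinAt hI (h.hasDerivWithinAt_J y hy)
    (h.continuousOn_Jt y hy) (fun τ hτ => (h.J_pos y hy τ hτ).ne') ht₀ ht,
    ← intervalIntegral.integral_const_mul]
  exact intervalIntegral.integral_sub
    (intervalIntegrable_of_continuousOn_ordConnected hI
      ((h.continuousOn_Jt_div_J hy).const_mul μ) ht₀ ht)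
    (intervalIntegrable_of_continuousOn_ordConnected hI (h.continuousOn_π y hy) ht₀ ht)

theorem integral_momentum_sub_eq (h : MomentumBalance S I μ ρ₀ J v π Jt mt)
    (hS : S.OrdConnected) (hI : I.OrdConnected)
    (ha : a ∈ S) (hy : y ∈ S) (ht₀ : t₀ ∈ I) (ht : t ∈ I) :
    ∫ ξ in a..y, ρ₀ ξ * (v ξ t₀ - v ξ t)
      = (∫ τ in t₀..t, effectiveViscousFlux μ J Jt π a τ)
        - ∫ τ in t₀..t, effectiveViscousFlux μ J Jt π y τ := by
  have flux_integrable : ∀ x ∈ S,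
      IntervalIntegrable (effectiveViscousFlux μ J Jt π x) volume t₀ t := fun x hx =>
    intervalIntegrable_of_continuousOn_ordConnected hI (h.continuousOn_flux hx) ht₀ ht
  have conservation := integral_sub_eq_integral_sub_of_conservation_law hS hI
    h.hasDerivWithinAt_momentum h.hasDerivWithinAt_flux h.continuousOn_mt ha hy ht ht₀
  simp only [← mul_sub] at conservation
  rw [conservation, intervalIntegral.integral_symm,
    intervalIntegral.integral_sub (flux_integrable y hy) (flux_integrable a ha), neg_sub]

theorem integral_pressure_eq (h : MomentumBalance S I μ ρ₀ J v π Jt mt)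
    (hS : S.OrdConnected) (hI : I.OrdConnected)
    (ha : a ∈ S) (hy : y ∈ S) (ht₀ : t₀ ∈ I) (ht : t ∈ I) :
    ∫ τ in t₀..t, π y τ
      = μ * Real.log (J y t / J y t₀) - (∫ τ in t₀..t, effectiveViscousFlux μ J Jt π a τ)
        + ∫ ξ in a..y, ρ₀ ξ * (v ξ t₀ - v ξ t) := by
  rw [h.integral_momentum_sub_eq hS hI ha hy ht₀ ht, h.integral_flux_eq hI hy ht₀ ht]
  ring

theorem J_div_mul_exp_mul_exp_eq (h : MomentumBalance S I μ ρ₀ J v π Jt mt) (hμ : μ ≠ 0)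
    (hS : S.OrdConnected) (hI : I.OrdConnected)
    (ha : a ∈ S) (hy : y ∈ S) (ht₀ : t₀ ∈ I) (ht : t ∈ I) :
    (J y t / J y t₀) * Real.exp (-(1 / μ) * ∫ τ in t₀..t, effectiveViscousFlux μ J Jt π a τ)
        * Real.exp ((1 / μ) * ∫ ξ in a..y, ρ₀ ξ * (v ξ t₀ - v ξ t))
      = Real.exp ((1 / μ) * ∫ τ in t₀..t, π y τ) := by
  have hJ_div_pos : 0 < J y t / J y t₀ := div_pos (h.J_pos y hy t ht) (h.J_pos y hy t₀ ht₀)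
  rw [h.integral_pressure_eq hS hI ha hy ht₀ ht, ← Real.exp_log hJ_div_pos, ← Real.exp_add,
    ← Real.exp_add, Real.log_exp]
  congr 1
  field_simp
  ring

end MomentumBalance

namespace ClassicalSolution

variable {L T μ γ : ℝ} {ρ₀ : ℝ → ℝ} {J v π Jt vy vt w πy πt : ℝ → ℝ → ℝ}

theorem hasDerivWithinAt_effectiveViscousFlux
    (hsol : ClassicalSolution L T μ γ ρ₀ J v π Jt vy vt w πy πt)
    {y t : ℝ} (hy : y ∈ Icc 0 L) (ht : t ∈ Icc 0 T) :
    HasDerivWithinAt (fun x => effectiveViscousFlux μ J Jt π x t) (ρ₀ y * vt y t) (Icc 0 L) y := by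
  have momentum_eq : ρ₀ y * vt y t = μ * w y t - πy y t := by linarith [hsol.eq2 y hy t ht]
  have flux_eq : ∀ x ∈ Icc 0 L,
      effectiveViscousFlux μ J Jt π x t = μ * (vy x t / J x t) - π x t := fun x hx => by
    rw [effectiveViscousFlux, hsol.eq1 x hx t ht]
  rw [momentum_eq]
  exact (((hsol.hw y hy t ht).const_mul μ).sub (hsol.hPiy y hy t ht)).congr flux_eq (flux_eq y hy)

theorem momentumBalance (hsol : ClassicalSolution L T μ γ ρ₀ J v π Jt vy vt w πy πt)
    (hρ₀ : ContinuousOn ρ₀ (Icc 0 L)) :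
    MomentumBalance (Icc 0 L) (Icc 0 T) μ ρ₀ J v π Jt fun y t => ρ₀ y * vt y t where
  J_pos := hsol.Jpos
  hasDerivWithinAt_J := hsol.hJt
  continuousOn_Jt := fun y hy => hsol.contJt.uncurry_left y hy
  continuousOn_π := fun y hy => hsol.contPi.uncurry_left y hy
  hasDerivWithinAt_momentum := fun y hy t ht => (hsol.hvt y hy t ht).const_mul (ρ₀ y)
  hasDerivWithinAt_flux := fun _ hy _ ht => hsol.hasDerivWithinAt_effectiveViscousFlux hy ht
  continuousOn_mt := (hρ₀.comp continuousOn_fst fun _ hp => hp.1).mul hsol.contvt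

end ClassicalSolution

theorem representation_formula_N1_general {L T μ : ℝ} {ρ₀ : ℝ → ℝ} {J v π Jt mt : ℝ → ℝ → ℝ}
    (hL : 0 ≤ L) (hT : 0 ≤ T) (hμ : μ ≠ 0)
    (h : MomentumBalance (Icc 0 L) (Icc 0 T) μ ρ₀ J v π Jt mt) :
    ∃ H : ℝ → ℝ, ContinuousOn H (Icc 0 T) ∧ (∀ t ∈ Icc (0 : ℝ) T, 0 < H t) ∧ H 0 = 1 ∧
      ∀ y ∈ Icc (0 : ℝ) L, ∀ t ∈ Icc (0 : ℝ) T,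
        (J y t / J y 0) * H t
            * Real.exp ((1 / μ) * ∫ ξ in (0 : ℝ)..y, ρ₀ ξ * (v ξ 0 - v ξ t))
          = Real.exp ((1 / μ) * ∫ τ in (0 : ℝ)..t, π y τ) := by
  have h0L : (0 : ℝ) ∈ Icc 0 L := left_mem_Icc.2 hL
  have h0T : (0 : ℝ) ∈ Icc 0 T := left_mem_Icc.2 hT
  have primitive_continuous : ContinuousOn
      (fun t => ∫ τ in (0 : ℝ)..t, effectiveViscousFlux μ J Jt π 0 τ) (Icc 0 T) := by
    rw [← uIcc_of_le hT]
    exact intervalIntegral.continuousOn_primitive_interval'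
      (intervalIntegrable_of_continuousOn_ordConnected ordConnected_Icc (h.continuousOn_flux h0L)
        h0T (right_mem_Icc.2 hT)) left_mem_uIcc
  refine ⟨fun t => Real.exp (-(1 / μ) * ∫ τ in (0 : ℝ)..t, effectiveViscousFlux μ J Jt π 0 τ),
    (primitive_continuous.const_mul _).rexp, fun t _ => Real.exp_pos _, by simp,
    fun y hy t ht => ?_⟩
  exact h.J_div_mul_exp_mul_exp_eq hμ ordConnected_Icc ordConnected_Icc h0L hy h0T ht

/-- (Representation formula (N1), Section 2.) There is a positive
continuous function `H` of time with `H(0) = 1` such that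
`(J/J₀) H B = exp((1/μ) ∫₀ᵗ π dτ)`, where
`B(y,t) = exp((1/μ) ∫₀ʸ ρ₀ (v₀ - v(·,t)) dξ)`. -/
theorem representation_formula_N1
    (L T μ γ : ℝ) (hL : 0 < L) (hT : 0 < T) (hμ : 0 < μ) (hγ : 1 < γ)
    (ρ₀ : ℝ → ℝ) (hρ₀ : ContinuousOn ρ₀ (Icc 0 L))
    (J v π Jt vy vt w πy πt Jy Jyt : ℝ → ℝ → ℝ)
    (hsol : ClassicalSolution L T μ γ ρ₀ J v π Jt vy vt w πy πt)
    (hbc : ∀ t ∈ Icc (0:ℝ) T, v 0 t = 0 ∧ v L t = 0)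
    (hJy : ∀ y ∈ Icc (0:ℝ) L, ∀ t ∈ Icc (0:ℝ) T,
      HasDerivWithinAt (fun x => J x t) (Jy y t) (Icc 0 L) y)
    (hJyt : ∀ y ∈ Icc (0:ℝ) L, ∀ t ∈ Icc (0:ℝ) T,
      HasDerivWithinAt (fun s => Jy y s) (Jyt y t) (Icc 0 T) t)
    (hJytcont : ContinuousOn (fun p : ℝ × ℝ => Jyt p.1 p.2) (Icc 0 L ×ˢ Icc 0 T)) :
    ∃ H : ℝ → ℝ, ContinuousOn H (Icc 0 T) ∧ (∀ t ∈ Icc (0:ℝ) T, 0 < H t) ∧ H 0 = 1 ∧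
      ∀ y ∈ Icc (0:ℝ) L, ∀ t ∈ Icc (0:ℝ) T,
        (J y t / J y 0) * H t
            * Real.exp ((1 / μ) * ∫ ξ in (0:ℝ)..y, ρ₀ ξ * (v ξ 0 - v ξ t))
          = Real.exp ((1 / μ) * ∫ τ in (0:ℝ)..t, π y τ) := by
  exact representation_formula_N1_general hL.le hT.le hμ.ne' (hsol.momentumBalance hρ₀)
end

section
/- Let (J, v, π) be a classical solution of (E1)–(E3) on [0,L]×[0,T] with boundary condition v(0,t) = v(L,t) = 0, and assume ρ₀ ≥ 0 and π ≥ 0 on [0,L]×[0,T]. Set m₀ := ∫₀ᴸ ρ₀ dy and E₀ := ∫₀ᴸ ( ρ₀ v₀²/2 + J₀ π₀/(γ−1) ) dy. Then for all (y,t) ∈ [0,L]×[0,T]: | ∫₀^y ρ₀(ξ)( v(ξ,t) − v₀(ξ) ) dξ | ≤ 2 √(2 m₀ E₀); consequently, with B(y,t) := exp( (1/μ) ∫₀^y ρ₀ ( v₀ − v(·,t) ) dξ ), one has e^{−(2/μ)√(2 m₀ E₀)} ≤ B(y,t) ≤ e^{(2/μ)√(2 m₀ E₀)}. -/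
open Set MeasureTheory

/-!
Testing the momentum equation with `v` and adding the pressure equation multiplied by `J / (γ - 1)`
shows that the energy density `e = ρ₀ v² / 2 + J π / (γ - 1)` satisfies the conservation law
`∂ₜ e = ∂_y (v σ)` with stress `σ = μ v_y / J - π`. The flux `v σ` vanishes at both endpoints, so
the total energy is constant in time, and since `J π ≥ 0` it controls `∫ ρ₀ v² / 2`.
Cauchy–Schwarz with weight `ρ₀` bounds each of the momenta `∫₀ʸ ρ₀ v(·, t)` and `∫₀ʸ ρ₀ v₀` by
`√(2 m₀ E₀)`.
-/

theorem sq_integral_weight_mul_mul_le {α : Type*} [MeasurableSpace α] {ν : Measure α}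
    {ρ f g : α → ℝ} (hρ : 0 ≤ᵐ[ν] ρ) (hf : Integrable (fun x => ρ x * f x ^ 2) ν)
    (hg : Integrable (fun x => ρ x * g x ^ 2) ν)
    (hfg : Integrable (fun x => ρ x * (f x * g x)) ν) :
    (∫ x, ρ x * (f x * g x) ∂ν) ^ 2 ≤ (∫ x, ρ x * f x ^ 2 ∂ν) * ∫ x, ρ x * g x ^ 2 ∂ν := by
  have quadratic_nonneg (s : ℝ) : 0 ≤ (∫ x, ρ x * f x ^ 2 ∂ν) * (s * s)
      + 2 * (∫ x, ρ x * (f x * g x) ∂ν) * s + ∫ x, ρ x * g x ^ 2 ∂ν := by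
    calc 0 ≤ ∫ x, ρ x * (s * f x + g x) ^ 2 ∂ν :=
          integral_nonneg_of_ae <| hρ.mono fun x hx => mul_nonneg hx (sq_nonneg _)
      _ = ∫ x, (s * s) * (ρ x * f x ^ 2) + (2 * s) * (ρ x * (f x * g x)) + ρ x * g x ^ 2 ∂ν :=
          integral_congr_ae <| .of_forall fun x => by ring
      _ = _ := by
          have hsum : Integrable
              (fun x => (s * s) * (ρ x * f x ^ 2) + (2 * s) * (ρ x * (f x * g x))) ν :=
            (hf.const_mul _).add (hfg.const_mul _)
          rw [integral_add hsum hg, integral_add (hf.const_mul _) (hfg.const_mul _),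
            integral_const_mul, integral_const_mul]
          ring
  have discrim_nonpos := discrim_le_zero quadratic_nonneg
  rw [discrim] at discrim_nonpos
  linarith

theorem abs_intervalIntegral_weight_mul_le_sqrt {ν : Measure ℝ} {a b y : ℝ} {ρ f : ℝ → ℝ}
    (hy : y ∈ Icc a b) (hρ : ∀ x ∈ Icc a b, 0 ≤ ρ x) (hρi : IntervalIntegrable ρ ν a b)
    (hρf : IntervalIntegrable (fun x => ρ x * f x) ν a b)
    (hρff : IntervalIntegrable (fun x => ρ x * f x ^ 2) ν a b) :
    |∫ x in a..y, ρ x * f x ∂ν|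
      ≤ √((∫ x in a..b, ρ x ∂ν) * ∫ x in a..b, ρ x * f x ^ 2 ∂ν) := by
  have subinterval : uIcc a y ⊆ uIcc a b := by
    rw [uIcc_of_le hy.1, uIcc_of_le (hy.1.trans hy.2)]
    exact Icc_subset_Icc_right hy.2
  have ae_Ioc {P : ℝ → Prop} (c : ℝ) (hc : c ≤ b) (hP : ∀ x ∈ Icc a b, P x) :
      ∀ᵐ x ∂ν.restrict (Ioc a c), P x :=
    ae_restrict_of_forall_mem measurableSet_Ioc fun x hx => hP x ⟨hx.1.le, hx.2.trans hc⟩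
  have cauchy_schwarz :
      (∫ x in a..y, ρ x * f x ∂ν) ^ 2
        ≤ (∫ x in a..y, ρ x ∂ν) * ∫ x in a..y, ρ x * f x ^ 2 ∂ν := by
    simp only [intervalIntegral.integral_of_le hy.1]
    simpa only [one_pow, mul_one, one_mul] using
      sq_integral_weight_mul_mul_le (f := fun _ => 1) (g := f) (ae_Ioc y hy.2 hρ)
        (by simpa [IntegrableOn] using (hρi.mono_set subinterval).1) (hρff.mono_set subinterval).1
        (by simpa [IntegrableOn] using (hρf.mono_set subinterval).1)
  have hρff_nonneg : ∀ x ∈ Icc a b, 0 ≤ ρ x * f x ^ 2 := fun x hx =>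
    mul_nonneg (hρ x hx) (sq_nonneg _)
  refine Real.abs_le_sqrt (cauchy_schwarz.trans (mul_le_mul ?_ ?_ ?_ ?_))
  · exact intervalIntegral.integral_mono_interval le_rfl hy.1 hy.2 (ae_Ioc b le_rfl hρ) hρi
  · exact intervalIntegral.integral_mono_interval le_rfl hy.1 hy.2
      (ae_Ioc b le_rfl hρff_nonneg) hρff
  · exact intervalIntegral.integral_nonneg hy.1 fun x hx =>
      hρff_nonneg x ⟨hx.1, hx.2.trans hy.2⟩
  · exact intervalIntegral.integral_nonneg (hy.1.trans hy.2) hρ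

section ConservationLaw

variable {E : Type*} [NormedAddCommGroup E] [NormedSpace ℝ E] [CompleteSpace E] {a b c d : ℝ}

theorem integral_eq_sub_of_hasDerivWithinAt_Icc (hab : a ≤ b) {f f' : ℝ → E}
    (hf : ∀ x ∈ Icc a b, HasDerivWithinAt f (f' x) (Icc a b) x)
    (hf' : IntervalIntegrable f' volume a b) : ∫ x in a..b, f' x = f b - f a :=
  intervalIntegral.integral_eq_sub_of_hasDerivAt_of_le hab (HasDerivWithinAt.continuousOn hf)
    (fun x hx => (hf x (Ioo_subset_Icc_self hx)).hasDerivAt (Icc_mem_nhds hx.1 hx.2)) hf'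

theorem integral_sub_eq_integral_flux_sub (hab : a ≤ b) (hcd : c ≤ d) {e q F : ℝ → ℝ → E}
    (hF : ContinuousOn F.uncurry (Icc a b ×ˢ Icc c d))
    (he : ∀ y ∈ Icc a b, ∀ s ∈ Icc c d, HasDerivWithinAt (e y) (F y s) (Icc c d) s)
    (hq : ∀ y ∈ Icc a b, ∀ s ∈ Icc c d, HasDerivWithinAt (q · s) (F y s) (Icc a b) y) :
    ∫ y in a..b, (e y d - e y c) = ∫ s in c..d, (q b s - q a s) := by
  calc ∫ y in a..b, (e y d - e y c)
      = ∫ y in a..b, ∫ s in c..d, F y s := by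
        refine intervalIntegral.integral_congr fun y hy => ?_
        rw [uIcc_of_le hab] at hy
        exact (integral_eq_sub_of_hasDerivWithinAt_Icc hcd (he y hy)
          ((hF.uncurry_left y hy).intervalIntegrable_of_Icc hcd)).symm
    _ = ∫ s in c..d, ∫ y in a..b, F y s := by
        refine intervalIntegral_intervalIntegral_swap ?_
        rw [uIoc_of_le hab, uIoc_of_le hcd]
        exact (hF.integrableOn_compact (isCompact_Icc.prod isCompact_Icc)).mono_set
          (prod_mono Ioc_subset_Icc_self Ioc_subset_Icc_self)
    _ = ∫ s in c..d, (q b s - q a s) := by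
        refine intervalIntegral.integral_congr fun s hs => ?_
        rw [uIcc_of_le hcd] at hs
        exact integral_eq_sub_of_hasDerivWithinAt_Icc hab (fun y hy => hq y hy s hs)
          ((hF.uncurry_right s hs).intervalIntegrable_of_Icc hab)

end ConservationLaw

/-- The energy per unit Lagrangian length, kinetic plus internal: `ρ₀ v² / 2 + J π / (γ - 1)`. -/
noncomputable def energyDensity (γ : ℝ) (ρ₀ : ℝ → ℝ) (J v π : ℝ → ℝ → ℝ) (y t : ℝ) : ℝ :=
  ρ₀ y * v y t ^ 2 / 2 + J y t * π y t / (γ - 1)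

/-- The stress `σ = μ v_y / J - π`, viscous part minus pressure; the momentum equation reads
`ρ₀ ∂ₜ v = ∂_y σ`. -/
noncomputable def stress (μ : ℝ) (J π vy : ℝ → ℝ → ℝ) (y t : ℝ) : ℝ :=
  μ * (vy y t / J y t) - π y t

/-- The power density `∂_y (v σ)` of the stress, expanded by the product rule; `w` stands for
`∂_y (v_y / J)`. -/
noncomputable def powerDensity (μ : ℝ) (J v π vy w πy : ℝ → ℝ → ℝ) (y t : ℝ) : ℝ :=
  vy y t * stress μ J π vy y t + v y t * (μ * w y t - πy y t)

namespace ClassicalSolution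

variable {L T μ γ : ℝ} {ρ₀ : ℝ → ℝ} {J v π Jt vy vt w πy πt : ℝ → ℝ → ℝ} {y t : ℝ}

theorem continuousOn_powerDensity
    (hsol : ClassicalSolution L T μ γ ρ₀ J v π Jt vy vt w πy πt) :
    ContinuousOn (powerDensity μ J v π vy w πy).uncurry (Icc 0 L ×ˢ Icc 0 T) := by
  have J_ne_zero : ∀ p ∈ Icc 0 L ×ˢ Icc 0 T, J p.1 p.2 ≠ 0 :=
    fun p hp => (hsol.Jpos p.1 hp.1 p.2 hp.2).ne'
  have continuousOn_stress :
      ContinuousOn (stress μ J π vy).uncurry (Icc 0 L ×ˢ Icc 0 T) :=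
    (continuousOn_const.mul (hsol.contvy.div hsol.contJ J_ne_zero)).sub hsol.contPi
  exact (hsol.contvy.mul continuousOn_stress).add
    (hsol.contv.mul ((continuousOn_const.mul hsol.contw).sub hsol.contPiy))

theorem continuousOn_energyDensity
    (hsol : ClassicalSolution L T μ γ ρ₀ J v π Jt vy vt w πy πt)
    (hρ₀ : ContinuousOn ρ₀ (Icc 0 L)) (ht : t ∈ Icc 0 T) :
    ContinuousOn (energyDensity γ ρ₀ J v π · t) (Icc 0 L) := by
  have hv := ContinuousOn.uncurry_right (f := v) t ht hsol.contv
  have hJ := ContinuousOn.uncurry_right (f := J) t ht hsol.contJ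
  have hπ := ContinuousOn.uncurry_right (f := π) t ht hsol.contPi
  exact ((hρ₀.mul (hv.pow 2)).div_const 2).add ((hJ.mul hπ).div_const (γ - 1))

theorem hasDerivWithinAt_energyFlux
    (hsol : ClassicalSolution L T μ γ ρ₀ J v π Jt vy vt w πy πt)
    (hy : y ∈ Icc 0 L) (ht : t ∈ Icc 0 T) :
    HasDerivWithinAt (fun x => v x t * stress μ J π vy x t)
      (powerDensity μ J v π vy w πy y t) (Icc 0 L) y :=
  (hsol.hvy y hy t ht).mul (((hsol.hw y hy t ht).const_mul μ).sub (hsol.hPiy y hy t ht))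

theorem hasDerivWithinAt_energyDensity
    (hsol : ClassicalSolution L T μ γ ρ₀ J v π Jt vy vt w πy πt) (hγ : γ ≠ 1)
    (hy : y ∈ Icc 0 L) (ht : t ∈ Icc 0 T) :
    HasDerivWithinAt (energyDensity γ ρ₀ J v π y) (powerDensity μ J v π vy w πy y t)
      (Icc 0 T) t := by
  have hγ' : γ - 1 ≠ 0 := sub_ne_zero.mpr hγ
  have hJ : J y t ≠ 0 := (hsol.Jpos y hy t ht).ne'
  have momentum : ρ₀ y * vt y t = μ * w y t - πy y t := by linarith [hsol.eq2 y hy t ht]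
  have pressure :
      πt y t = μ * (γ - 1) * (vy y t / J y t) ^ 2 - γ * (vy y t / J y t) * π y t := by
    linarith [hsol.eq3 y hy t ht]
  have kinetic_deriv : HasDerivWithinAt (fun s => ρ₀ y * v y s ^ 2 / 2)
      (v y t * (μ * w y t - πy y t)) (Icc 0 T) t := by
    refine ((((hsol.hvt y hy t ht).pow 2).const_mul (ρ₀ y)).div_const 2).congr_deriv ?_
    rw [← momentum]
    ring
  have internal_deriv : HasDerivWithinAt (fun s => J y s * π y s / (γ - 1))
      (vy y t * stress μ J π vy y t) (Icc 0 T) t := by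
    refine (((hsol.hJt y hy t ht).mul (hsol.hPit y hy t ht)).div_const (γ - 1)).congr_deriv ?_
    rw [hsol.eq1 y hy t ht, pressure, stress]
    field_simp
    ring
  exact (kinetic_deriv.add internal_deriv).congr_deriv (add_comm _ _)

theorem integral_energyDensity_eq
    (hsol : ClassicalSolution L T μ γ ρ₀ J v π Jt vy vt w πy πt) (hL : 0 ≤ L) (hγ : γ ≠ 1)
    (hρ₀ : ContinuousOn ρ₀ (Icc 0 L)) (hbc : ∀ s ∈ Icc 0 T, v 0 s = 0 ∧ v L s = 0)
    (ht : t ∈ Icc 0 T) :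
    ∫ x in 0..L, energyDensity γ ρ₀ J v π x t = ∫ x in 0..L, energyDensity γ ρ₀ J v π x 0 := by
  have h0 : (0 : ℝ) ∈ Icc 0 T := ⟨le_rfl, ht.1.trans ht.2⟩
  have time_subset : Icc 0 t ⊆ Icc 0 T := Icc_subset_Icc_right ht.2
  have balance := integral_sub_eq_integral_flux_sub hL ht.1
    (hsol.continuousOn_powerDensity.mono (prod_mono_right time_subset))
    (fun x hx s hs =>
      (hsol.hasDerivWithinAt_energyDensity hγ hx (time_subset hs)).mono time_subset)
    (fun x hx s hs => hsol.hasDerivWithinAt_energyFlux hx (time_subset hs))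
  have no_flux :
      ∫ s in 0..t, (v L s * stress μ J π vy L s - v 0 s * stress μ J π vy 0 s) = 0 := by
    refine intervalIntegral.integral_zero_ae (.of_forall fun s hs => ?_)
    rw [uIoc_of_le ht.1] at hs
    obtain ⟨v_left, v_right⟩ := hbc s (time_subset (Ioc_subset_Icc_self hs))
    rw [v_left, v_right, zero_mul, zero_mul, sub_zero]
  rw [no_flux, intervalIntegral.integral_sub
    ((hsol.continuousOn_energyDensity hρ₀ ht).intervalIntegrable_of_Icc hL)
    ((hsol.continuousOn_energyDensity hρ₀ h0).intervalIntegrable_of_Icc hL)] at balance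
  exact sub_eq_zero.mp balance

theorem integral_density_mul_sq_velocity_le
    (hsol : ClassicalSolution L T μ γ ρ₀ J v π Jt vy vt w πy πt) (hL : 0 ≤ L) (hγ : 1 < γ)
    (hρ₀ : ContinuousOn ρ₀ (Icc 0 L)) (ht : t ∈ Icc 0 T) (hπ : ∀ x ∈ Icc 0 L, 0 ≤ π x t) :
    ∫ x in 0..L, ρ₀ x * v x t ^ 2 ≤ 2 * ∫ x in 0..L, energyDensity γ ρ₀ J v π x t := by
  have hv := ContinuousOn.uncurry_right (f := v) t ht hsol.contv
  rw [← intervalIntegral.integral_const_mul]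
  refine intervalIntegral.integral_mono_on hL
    ((hρ₀.mul (hv.pow 2)).intervalIntegrable_of_Icc hL)
    (((hsol.continuousOn_energyDensity hρ₀ ht).intervalIntegrable_of_Icc hL).const_mul 2)
    fun x hx => ?_
  have internal_nonneg : 0 ≤ J x t * π x t / (γ - 1) :=
    div_nonneg (mul_nonneg (hsol.Jpos x hx t ht).le (hπ x hx)) (sub_pos.mpr hγ).le
  rw [energyDensity]
  linarith

theorem abs_integral_momentum_le
    (hsol : ClassicalSolution L T μ γ ρ₀ J v π Jt vy vt w πy πt) (hγ : 1 < γ)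
    (hρ₀ : ContinuousOn ρ₀ (Icc 0 L)) (hρ₀nonneg : ∀ x ∈ Icc 0 L, 0 ≤ ρ₀ x)
    (hbc : ∀ s ∈ Icc 0 T, v 0 s = 0 ∧ v L s = 0) (hπ : ∀ x ∈ Icc 0 L, 0 ≤ π x t)
    (hy : y ∈ Icc 0 L) (ht : t ∈ Icc 0 T) :
    |∫ ξ in 0..y, ρ₀ ξ * v ξ t|
      ≤ √(2 * (∫ x in 0..L, ρ₀ x) * ∫ x in 0..L, energyDensity γ ρ₀ J v π x 0) := by
  have hL : 0 ≤ L := hy.1.trans hy.2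
  have hv := ContinuousOn.uncurry_right (f := v) t ht hsol.contv
  have mass_nonneg : 0 ≤ ∫ x in 0..L, ρ₀ x := intervalIntegral.integral_nonneg hL hρ₀nonneg
  calc |∫ ξ in 0..y, ρ₀ ξ * v ξ t|
      ≤ √((∫ x in 0..L, ρ₀ x) * ∫ x in 0..L, ρ₀ x * v x t ^ 2) :=
        abs_intervalIntegral_weight_mul_le_sqrt hy hρ₀nonneg (hρ₀.intervalIntegrable_of_Icc hL)
          ((hρ₀.mul hv).intervalIntegrable_of_Icc hL)
          ((hρ₀.mul (hv.pow 2)).intervalIntegrable_of_Icc hL)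
    _ ≤ √((∫ x in 0..L, ρ₀ x) * (2 * ∫ x in 0..L, energyDensity γ ρ₀ J v π x t)) := by
        gcongr
        exact hsol.integral_density_mul_sq_velocity_le hL hγ hρ₀ ht hπ
    _ = √(2 * (∫ x in 0..L, ρ₀ x) * ∫ x in 0..L, energyDensity γ ρ₀ J v π x 0) := by
        rw [hsol.integral_energyDensity_eq hL hγ.ne' hρ₀ hbc ht, mul_left_comm, mul_assoc]

theorem abs_integral_momentum_sub_le
    (hsol : ClassicalSolution L T μ γ ρ₀ J v π Jt vy vt w πy πt) (hγ : 1 < γ)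
    (hρ₀ : ContinuousOn ρ₀ (Icc 0 L)) (hρ₀nonneg : ∀ x ∈ Icc 0 L, 0 ≤ ρ₀ x)
    (hbc : ∀ s ∈ Icc 0 T, v 0 s = 0 ∧ v L s = 0)
    (hπ : ∀ x ∈ Icc 0 L, ∀ s ∈ Icc 0 T, 0 ≤ π x s)
    {s : ℝ} (hy : y ∈ Icc 0 L) (hs : s ∈ Icc 0 T) (ht : t ∈ Icc 0 T) :
    |∫ ξ in 0..y, ρ₀ ξ * (v ξ t - v ξ s)|
      ≤ 2 * √(2 * (∫ x in 0..L, ρ₀ x) * ∫ x in 0..L, energyDensity γ ρ₀ J v π x 0) := by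
  have momentum_integrable {r : ℝ} (hr : r ∈ Icc 0 T) :
      IntervalIntegrable (fun ξ => ρ₀ ξ * v ξ r) volume 0 y :=
    ((hρ₀.mul (ContinuousOn.uncurry_right (f := v) r hr hsol.contv)).mono
      (Icc_subset_Icc_right hy.2)).intervalIntegrable_of_Icc hy.1
  have momentum_le {r : ℝ} (hr : r ∈ Icc 0 T) :=
    hsol.abs_integral_momentum_le hγ hρ₀ hρ₀nonneg hbc (fun x hx => hπ x hx r hr) hy hr
  simp only [mul_sub]
  rw [intervalIntegral.integral_sub (momentum_integrable ht) (momentum_integrable hs), two_mul]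
  exact (abs_sub _ _).trans (add_le_add (momentum_le ht) (momentum_le hs))

end ClassicalSolution

/-- (Estimate (EstB) in the proof of Proposition 2.3.) For a classical
solution with `ρ₀ ≥ 0` and `π ≥ 0`, setting `m₀ = ∫₀ᴸ ρ₀` and
`E₀ = ∫₀ᴸ (ρ₀ v₀²/2 + J₀π₀/(γ-1))`, one has
`|∫₀ʸ ρ₀ (v - v₀) dξ| ≤ 2√(2 m₀ E₀)`, and hence the two-sided bound on
`B = exp((1/μ)∫₀ʸ ρ₀ (v₀ - v(·,t)) dξ)`. -/
theorem estimate_B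
    (L T μ γ : ℝ) (hL : 0 < L) (hT : 0 < T) (hμ : 0 < μ) (hγ : 1 < γ)
    (ρ₀ : ℝ → ℝ) (hρ₀ : ContinuousOn ρ₀ (Icc 0 L))
    (hρ₀nonneg : ∀ y ∈ Icc (0:ℝ) L, 0 ≤ ρ₀ y)
    (J v π Jt vy vt w πy πt : ℝ → ℝ → ℝ)
    (hsol : ClassicalSolution L T μ γ ρ₀ J v π Jt vy vt w πy πt)
    (hbc : ∀ t ∈ Icc (0:ℝ) T, v 0 t = 0 ∧ v L t = 0)
    (hπnonneg : ∀ y ∈ Icc (0:ℝ) L, ∀ t ∈ Icc (0:ℝ) T, 0 ≤ π y t)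
    (m₀ E₀ : ℝ)
    (hm₀ : m₀ = ∫ y in (0:ℝ)..L, ρ₀ y)
    (hE₀ : E₀ = ∫ y in (0:ℝ)..L, (ρ₀ y * (v y 0) ^ 2 / 2 + J y 0 * π y 0 / (γ - 1))) :
    ∀ y ∈ Icc (0:ℝ) L, ∀ t ∈ Icc (0:ℝ) T,
      |∫ ξ in (0:ℝ)..y, ρ₀ ξ * (v ξ t - v ξ 0)| ≤ 2 * Real.sqrt (2 * m₀ * E₀) ∧
      Real.exp (-(2 / μ) * Real.sqrt (2 * m₀ * E₀))
          ≤ Real.exp ((1 / μ) * ∫ ξ in (0:ℝ)..y, ρ₀ ξ * (v ξ 0 - v ξ t)) ∧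
      Real.exp ((1 / μ) * ∫ ξ in (0:ℝ)..y, ρ₀ ξ * (v ξ 0 - v ξ t))
          ≤ Real.exp ((2 / μ) * Real.sqrt (2 * m₀ * E₀)) := by
  intro y hy t ht
  have momentum_bound :
      |∫ ξ in (0:ℝ)..y, ρ₀ ξ * (v ξ t - v ξ 0)| ≤ 2 * √(2 * m₀ * E₀) := by
    subst hm₀ hE₀
    exact hsol.abs_integral_momentum_sub_le hγ hρ₀ hρ₀nonneg hbc hπnonneg hy
      (left_mem_Icc.mpr hT.le) ht
  have exponent_bound :
      |(1 / μ) * ∫ ξ in (0:ℝ)..y, ρ₀ ξ * (v ξ 0 - v ξ t)| ≤ (2 / μ) * √(2 * m₀ * E₀) := by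
    calc |(1 / μ) * ∫ ξ in (0:ℝ)..y, ρ₀ ξ * (v ξ 0 - v ξ t)|
        = (1 / μ) * |∫ ξ in (0:ℝ)..y, ρ₀ ξ * (v ξ t - v ξ 0)| := by
          rw [abs_mul, abs_of_pos (one_div_pos.mpr hμ), ← abs_neg, ← intervalIntegral.integral_neg]
          simp only [← mul_neg, neg_sub]
      _ ≤ (1 / μ) * (2 * √(2 * m₀ * E₀)) := by gcongr
      _ = (2 / μ) * √(2 * m₀ * E₀) := by ring
  obtain ⟨lower, upper⟩ := abs_le.mp exponent_bound
  rw [← neg_mul] at lower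
  exact ⟨momentum_bound, Real.exp_le_exp.mpr lower, Real.exp_le_exp.mpr upper⟩
end
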